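/- Grönwall-type lemma for square-energy differential inequalities (the abstract step used to pass from the differential inequality to (pf:ene-low-10) in the proof of Lemma 3.2): let c ≥ 0, let W : [0,∞) → ℝ be continuous and nonnegative with t ↦ W(t)² differentiable on [0,∞), and let G : [0,∞) → ℝ be continuous and nonnegative. If (1/2)·d/dt(W(t)²) + c·W(t)² ≤ G(t)·W(t) for all t ≥ 0, then for all t ≥ 0: W(t) ≤ e^{−ct}·W(0) + ∫₀ᵗ e^{−c(t−s)}·G(s) ds. -/

import Mathlib

/-!
The candidate bound is the solution `B` of `B' = -c B + G`, `B a = ‖W a‖`. Dividing the energy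
inequality by `‖W‖` would show that `‖W‖` is a subsolution of this equation, but `‖W‖` need not be
differentiable at its zeros. So `‖W‖²` is compared with `B²` instead, after adding
`ε e^{(1-c)(t-a)}` to `B`: this makes `B` positive and a strict supersolution. Then let `ε → 0`.
-/

open Set MeasureTheory intervalIntegral

section Duhamel

variable {F : Type*} [NormedAddCommGroup F] [NormedSpace ℝ F]

/-- Duhamel's formula for the solution of `u' = -c u + G` with `u a = x`. -/
noncomputable def duhamel (c a : ℝ) (x : F) (G : ℝ → F) (t : ℝ) : F :=
  Real.exp (-c * (t - a)) • x + ∫ s in a..t, Real.exp (-c * (t - s)) • G s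

theorem duhamel_self (c a : ℝ) (x : F) (G : ℝ → F) : duhamel c a x G a = x := by
  simp [duhamel]

theorem duhamel_nonneg {c a t x : ℝ} {G : ℝ → ℝ} (hat : a ≤ t) (hx : 0 ≤ x)
    (hG : ∀ s ∈ Icc a t, 0 ≤ G s) : 0 ≤ duhamel c a x G t :=
  add_nonneg (smul_nonneg (Real.exp_nonneg _) hx) <|
    integral_nonneg hat fun s hs => smul_nonneg (Real.exp_nonneg _) (hG s hs)

theorem duhamel_eq_exp_smul (c a : ℝ) (x : F) (G : ℝ → F) (t : ℝ) :
    duhamel c a x G t =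
      Real.exp (-c * (t - a)) • (x + ∫ s in a..t, Real.exp (c * (s - a)) • G s) := by
  rw [duhamel, smul_add, ← intervalIntegral.integral_smul]
  congr! 3 with s
  rw [smul_smul, ← Real.exp_add]
  ring_nf

variable [CompleteSpace F]

theorem hasDerivWithinAt_integral_Icc {a b t : ℝ} {f : ℝ → F} (hf : ContinuousOn f (Icc a b))
    (ht : t ∈ Icc a b) : HasDerivWithinAt (fun u => ∫ s in a..u, f s) (f t) (Icc a b) t := by
  have : Fact (t ∈ Icc a b) := ⟨ht⟩
  have hint : IntervalIntegrable f volume a t :=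
    (hf.mono (Icc_subset_Icc_right ht.2)).intervalIntegrable_of_Icc ht.1
  exact integral_hasDerivWithinAt_right hint
    (hf.stronglyMeasurableAtFilter_nhdsWithin measurableSet_Icc t) (hf t ht)

theorem hasDerivWithinAt_duhamel {a b t : ℝ} {G : ℝ → F} (c : ℝ) (x : F)
    (hG : ContinuousOn G (Icc a b)) (ht : t ∈ Icc a b) :
    HasDerivWithinAt (duhamel c a x G) (G t - c • duhamel c a x G t) (Icc a b) t := by
  have hexp : HasDerivAt (fun u => Real.exp (-c * (u - a))) (Real.exp (-c * (t - a)) * -c) t := by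
    simpa using (((hasDerivAt_id t).sub_const a).const_mul (-c)).exp
  have hintegrand : ContinuousOn (fun s => Real.exp (c * (s - a)) • G s) (Icc a b) := by
    fun_prop
  have hprod := hexp.hasDerivWithinAt.smul
    ((hasDerivWithinAt_integral_Icc hintegrand ht).const_add x)
  rw [funext (duhamel_eq_exp_smul c a x G)]
  refine hprod.congr_deriv ?_
  have hcancel : Real.exp (-c * (t - a)) * Real.exp (c * (t - a)) = 1 := by
    rw [← Real.exp_add, neg_mul, neg_add_cancel, Real.exp_zero]
  rw [smul_smul, hcancel, one_smul, mul_neg, neg_smul, mul_comm _ c, mul_smul, ← sub_eq_add_neg]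

end Duhamel

section Comparison

variable {a b : ℝ} {y y2' B B' : ℝ → ℝ}

theorem le_of_deriv_sq_lt_deriv_sq_boundary
    (hy : ∀ t ∈ Icc a b, 0 ≤ y t) (hycont : ContinuousOn y (Icc a b))
    (hy2 : ∀ t ∈ Ico a b, HasDerivWithinAt (fun s => y s ^ 2) (y2' t) (Ici t) t)
    (hB : ∀ t ∈ Icc a b, 0 ≤ B t) (hBcont : ContinuousOn B (Icc a b))
    (hB' : ∀ t ∈ Ico a b, HasDerivWithinAt B (B' t) (Ici t) t)
    (hinit : y a ≤ B a) (hlt : ∀ t ∈ Ico a b, y t = B t → y2' t < 2 * B t * B' t) :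
    ∀ t ∈ Icc a b, y t ≤ B t := by
  intro t ht
  have hsq : y t ^ 2 ≤ B t ^ 2 := by
    refine image_le_of_deriv_right_lt_deriv_boundary' (B := fun s => B s ^ 2)
      (B' := fun s => 2 * B s * B' s) (hycont.pow 2) hy2
      (pow_le_pow_left₀ (hy a ⟨le_rfl, ht.1.trans ht.2⟩) hinit 2) (hBcont.pow 2)
      (fun s hs => by simpa using (hB' s hs).fun_pow 2) (fun s hs htouch => hlt s hs ?_) ht
    have hs' := Ico_subset_Icc_self hs
    exact (sq_eq_sq₀ (hy s hs') (hB s hs')).1 htouch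
  exact (sq_le_sq₀ (hy t ht) (hB t ht)).1 hsq

theorem le_supersolution_of_sq_energy {c : ℝ} {G : ℝ → ℝ}
    (hy : ∀ t ∈ Icc a b, 0 ≤ y t) (hycont : ContinuousOn y (Icc a b))
    (hy2 : ∀ t ∈ Ico a b, HasDerivWithinAt (fun s => y s ^ 2) (y2' t) (Ici t) t)
    (hineq : ∀ t ∈ Ico a b, (1 / 2) * y2' t + c * y t ^ 2 ≤ G t * y t)
    (hB : ∀ t ∈ Icc a b, 0 ≤ B t) (hBcont : ContinuousOn B (Icc a b))
    (hB' : ∀ t ∈ Ico a b, HasDerivWithinAt B (B' t) (Ici t) t)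
    (hinit : y a ≤ B a) (hsuper : ∀ t ∈ Ico a b, G t ≤ B' t + c * B t) :
    ∀ t ∈ Icc a b, y t ≤ B t := by
  intro t ht
  set p : ℝ → ℝ := fun s => Real.exp ((1 - c) * (s - a)) with hp
  have hp_pos : ∀ s, 0 < p s := fun s => Real.exp_pos _
  have hp_deriv : ∀ s, HasDerivAt p ((1 - c) * p s) s := fun s => by
    simpa [hp, mul_comm] using (((hasDerivAt_id s).sub_const a).const_mul (1 - c)).exp
  have hperturbed : ∀ ε > 0, y t ≤ B t + ε * p t := by
    intro ε hε
    have hεp : ∀ s, 0 < ε * p s := fun s => mul_pos hε (hp_pos s)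
    refine le_of_deriv_sq_lt_deriv_sq_boundary (B := fun s => B s + ε * p s)
      (B' := fun s => B' s + ε * ((1 - c) * p s)) hy hycont hy2
      (fun s hs => add_nonneg (hB s hs) (hεp s).le) (by fun_prop)
      (fun s hs => (hB' s hs).add ((hp_deriv s).const_mul ε).hasDerivWithinAt)
      (hinit.trans (le_add_of_nonneg_right (hεp a).le)) (fun s hs htouch => ?_) t ht
    have hy_pos : 0 < y s :=
      htouch ▸ add_pos_of_nonneg_of_pos (hB s (Ico_subset_Icc_self hs)) (hεp s)
    have hstrict : G s - c * y s < B' s + ε * ((1 - c) * p s) := by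
      rw [htouch]
      linarith [hsuper s hs, hεp s]
    calc y2' s ≤ 2 * y s * (G s - c * y s) := by linarith [hineq s hs]
      _ < 2 * y s * (B' s + ε * ((1 - c) * p s)) := by gcongr
      _ = 2 * (B s + ε * p s) * (B' s + ε * ((1 - c) * p s)) := by rw [htouch]
  refine le_of_forall_pos_le_add fun δ hδ => ?_
  simpa [(hp_pos t).ne'] using hperturbed (δ / p t) (div_pos hδ (hp_pos t))

end Comparison

theorem gronwall_square_energy_general {E : Type*} [SeminormedAddCommGroup E] {a b c : ℝ}
    {W : ℝ → E} {W2' G : ℝ → ℝ} (hWcont : ContinuousOn (fun s => ‖W s‖) (Icc a b))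
    (hW2 : ∀ t ∈ Ico a b, HasDerivWithinAt (fun s => ‖W s‖ ^ 2) (W2' t) (Ici t) t)
    (hGcont : ContinuousOn G (Icc a b)) (hGnonneg : ∀ t ∈ Icc a b, 0 ≤ G t)
    (hineq : ∀ t ∈ Ico a b, (1 / 2) * W2' t + c * ‖W t‖ ^ 2 ≤ G t * ‖W t‖) :
    ∀ t ∈ Icc a b, ‖W t‖ ≤ Real.exp (-c * (t - a)) * ‖W a‖
      + ∫ s in a..t, Real.exp (-c * (t - s)) * G s := by
  have hB : ∀ t ∈ Icc a b, HasDerivWithinAt (duhamel c a ‖W a‖ G)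
      (G t - c * duhamel c a ‖W a‖ G t) (Icc a b) t :=
    fun t ht => hasDerivWithinAt_duhamel c ‖W a‖ hGcont ht
  exact le_supersolution_of_sq_energy (B := duhamel c a ‖W a‖ G)
    (fun t _ => norm_nonneg (W t)) hWcont hW2 hineq
    (fun t ht => duhamel_nonneg ht.1 (norm_nonneg _)
      fun s hs => hGnonneg s (Icc_subset_Icc_right ht.2 hs))
    (fun t ht => (hB t ht).continuousWithinAt)
    (fun t ht => (hB t (Ico_subset_Icc_self ht)).mono_of_mem_nhdsWithin
      (Icc_mem_nhdsGE_of_mem ht))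
    (duhamel_self c a ‖W a‖ G).ge (fun t _ => (sub_add_cancel _ _).ge)

/-- Grönwall-type lemma for square-energy differential inequalities (the abstract step used to
pass from the differential inequality to (pf:ene-low-10) in the proof of Lemma 3.2):
if `W ≥ 0` is continuous on `[0,∞)` with `W²` differentiable, `G ≥ 0` is continuous, `c ≥ 0`,
and `(1/2)(W²)′(t) + cW(t)² ≤ G(t)W(t)` for all `t ≥ 0`, then
`W(t) ≤ e^{−ct}W(0) + ∫₀ᵗ e^{−c(t−s)}G(s) ds` for all `t ≥ 0`. -/
theorem gronwall_square_energy
    (c : ℝ) (hc : 0 ≤ c) (W W2' G : ℝ → ℝ)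
    (hWcont : ContinuousOn W (Set.Ici 0))
    (hWnonneg : ∀ t : ℝ, 0 ≤ t → 0 ≤ W t)
    (hW2 : ∀ t : ℝ, 0 ≤ t → HasDerivAt (fun s => W s ^ 2) (W2' t) t)
    (hGcont : ContinuousOn G (Set.Ici 0))
    (hGnonneg : ∀ t : ℝ, 0 ≤ t → 0 ≤ G t)
    (hineq : ∀ t : ℝ, 0 ≤ t → (1 / 2) * W2' t + c * W t ^ 2 ≤ G t * W t) :
    ∀ t : ℝ, 0 ≤ t →
      W t ≤ Real.exp (-c * t) * W 0
        + ∫ s in (0:ℝ)..t, Real.exp (-c * (t - s)) * G s := by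
  intro t ht
  simpa [abs_of_nonneg, hWnonneg, ht] using gronwall_square_energy_general (c := c) (W := W)
    (hWcont.mono Icc_subset_Ici_self).norm
    (fun s hs => by simpa using (hW2 s hs.1).hasDerivWithinAt)
    (hGcont.mono Icc_subset_Ici_self) (fun s hs => hGnonneg s hs.1)
    (fun s hs => by simpa [abs_of_nonneg, hWnonneg, hs.1] using hineq s hs.1) t ⟨ht, le_rfl⟩
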